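/- Let $\mathcal A$ be a finite alphabet with $N\ge 2$ letters and $\mathcal W$ the set of finite words over $\mathcal A$, including the empty word $\emptyset$; $|w|$ is the length of $w$, $w^-$ is $w$ with its last letter removed, and $wi$ is $w$ followed by the letter $i$. Let $\sim$ be an equivalence relation on $\mathcal W$ such that $v\sim w$ implies $|v|=|w|$, and let $R(w)$ be the (finite) number of words equivalent to $w$. A mass distribution is a map $m:\mathcal A\to(0,1)$ with $\sum_{a\in\mathcal A}m(a)=1$, extended to words by $m(w_1\cdots w_n)=m(w_1)\cdots m(w_n)$ and $m(\emptyset)=1$. Put $p(v,w)=m(w)/\sum_{\hat v\sim v}m(\hat v)$ if $w=\hat v i$ for some $\hat v\sim v$ and $i\in\mathcal A$, and $p(v,w)=0$ otherwise; let $p_0(v,w)=\delta_v(w)$ and $p_n(v,w)=\sum_{u\in\mathcal W}p_{n-1}(v,u)\,p(u,w)$ for $n\ge1$; let $g(v,w)=p_{|w|-|v|}(v,w)$ if $|w|\ge|v|$ and $g(v,w)=0$ otherwise; and let $q(v,w)=\frac{g(v,w)}{m(w)}\sum_{\hat v\sim v}m(\hat v)$ for $v\ne w$, and $q(v,v)=1$.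 Say that $m$ satisfies (B2) if for every $w\in\mathcal W$ either $m(\tilde w)=m(w)$ for all $\tilde w\sim w$, or $\tilde w^-\sim w^-$ for all $\tilde w\sim w$. If $m$ satisfies (B2), then for all $v,w\in\mathcal W$ and $i\in\mathcal A$ with $v\not\sim w$ and $v\neq wi$, $$q(v,wi)=\frac1{R(w)}\sum_{\tilde w\sim w}q(v,\tilde w).$$ In particular, $q$ is independent of $m$: for a given relation $\sim$, any two mass distributions that satisfy (B2) define the same function $q$ on $\mathcal W\times\mathcal W$. -/

import Mathlib

namespace Martin

/-- Finite words over the alphabet `A`: the empty list is the empty word `∅`,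
`w ++ [i]` is the word `wi`, and `w.dropLast` is the parent `w⁻`. -/
abbrev Word (A : Type*) := List A

/-- A mass distribution on the alphabet: `m(a) ∈ (0,1)` for every letter, total mass one. -/
def IsMassDistribution {A : Type*} [Fintype A] (m : A → ℝ) : Prop :=
  (∀ a, m a ∈ Set.Ioo (0 : ℝ) 1) ∧ ∑ a, m a = 1

/-- The mass of a word: `m(w₁⋯wₙ) = m(w₁)⋯m(wₙ)`, `m(∅) = 1`. -/
noncomputable def mW {A : Type*} (m : A → ℝ) (w : Word A) : ℝ := (w.map m).prod

/-- Total mass of the equivalence class of `v`: `Σ_{v̂ ∼ v} m(v̂)`. The sum is finite when the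
alphabet is finite and equivalent words have the same length. -/
noncomputable def massCl {A : Type*} (sim : Word A → Word A → Prop) (m : A → ℝ)
    (v : Word A) : ℝ :=
  ∑ᶠ u ∈ {u : Word A | sim u v}, mW m u

open Classical in
/-- Transition probability: `p(v,w) = m(w)/(Σ_{v̂∼v} m(v̂))` if `w = v̂i` for some
`v̂ ∼ v` and some letter `i`, and `0` otherwise. -/
noncomputable def pTrans {A : Type*} (sim : Word A → Word A → Prop) (m : A → ℝ)
    (v w : Word A) : ℝ :=
  if ∃ v' : Word A, ∃ i : A, sim v' v ∧ w = v' ++ [i] then mW m w / massCl sim m v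
  else 0

open Classical in
/-- `n`-step transition probabilities: `p₀(v,w) = δ_v(w)`,
`pₙ(v,w) = Σ_u pₙ₋₁(v,u) p(u,w)`. The sum is finite: `p(u,w) ≠ 0` forces `u ∼ w⁻`. -/
noncomputable def pn {A : Type*} (sim : Word A → Word A → Prop) (m : A → ℝ) :
    ℕ → Word A → Word A → ℝ
  | 0, v, w => if w = v then 1 else 0
  | n + 1, v, w => ∑ᶠ u : Word A, pn sim m n v u * pTrans sim m u w

/-- The Green function: `g(v,w) = p_{|w|−|v|}(v,w)`, and `g(v,w) = 0` when `|w| < |v|`. -/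
noncomputable def green {A : Type*} (sim : Word A → Word A → Prop) (m : A → ℝ)
    (v w : Word A) : ℝ :=
  if v.length ≤ w.length then pn sim m (w.length - v.length) v w else 0

open Classical in
/-- The function `q(v,w) = g(v,w)·(Σ_{v̂∼v} m(v̂))/m(w)` for `v ≠ w`, and `q(v,v) = 1`. -/
noncomputable def qfun {A : Type*} (sim : Word A → Word A → Prop) (m : A → ℝ)
    (v w : Word A) : ℝ :=
  if v = w then 1 else green sim m v w * massCl sim m v / mW m w

/-- `R(w)`: the number of words equivalent to `w`. -/
noncomputable def Rnum {A : Type*} (sim : Word A → Word A → Prop) (w : Word A) : ℕ :=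
  Set.ncard {u : Word A | sim u w}

/-- Assumption (B2): for every word `w`, either all words equivalent to `w` have the mass of `w`,
or all words equivalent to `w` have parents equivalent to the parent of `w`. -/
def B2 {A : Type*} (sim : Word A → Word A → Prop) (m : A → ℝ) : Prop :=
  ∀ w : Word A, (∀ w', sim w' w → mW m w' = mW m w) ∨
    (∀ w', sim w' w → sim w'.dropLast w.dropLast)

end Martin

/-!
Write `M(w)` for the mass of the class of `w`. A step of the chain into `wi` can only leave from the
class of `w`, so `g(v, wi) = m(wi) / M(w) · ∑_{u ∼ w} g(v, u)` whenever `v ≠ wi`. Hence `q(v, wi)`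
depends on `v` and on the class of `w` only, and if `v ≁ w` then it is the mean of `q(v, ·)` over
that class with respect to the weights `m`. This weighted mean is the plain average as soon as
`m` or `q(v, ·)` is constant on the class, and (B2) provides exactly this alternative: words whose
parents are equivalent have the same value of `q(v, ·)`. Together with `q(v, wi) = 1` for `v ∼ w`,
the averaging formula is a recursion for `q` in the length of the word that does not mention `m`.
-/

/-- An equality case of Chebyshev's sum inequality. -/
theorem ncard_mul_finsum_mem_mul_of_const {ι R : Type*} [CommSemiring R] {s : Set ι}
    (hs : s.Finite) {f g : ι → R} {c : R} (hf : ∀ i ∈ s, f i = c) :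
    (s.ncard : R) * ∑ᶠ i ∈ s, f i * g i = (∑ᶠ i ∈ s, f i) * ∑ᶠ i ∈ s, g i := by
  have hsum : ∑ᶠ i ∈ s, f i = s.ncard * c := by
    rw [finsum_mem_congr rfl hf, finsum_mem_eq_finite_toFinset_sum _ hs, Finset.sum_const,
      nsmul_eq_mul, Set.ncard_eq_toFinset_card s hs]
  have hmul : ∑ᶠ i ∈ s, f i * g i = c * ∑ᶠ i ∈ s, g i := by
    rw [mul_finsum_mem' _ _ hs]
    exact finsum_mem_congr rfl fun i hi => by rw [hf i hi]
  rw [hsum, hmul, mul_assoc]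

namespace Martin

variable {A : Type*} {sim : Word A → Word A → Prop} {m m' : A → ℝ} {u v w x y : Word A}

theorem mW_pos (hm : ∀ a, 0 < m a) (w : Word A) : 0 < mW m w :=
  List.prod_pos (List.forall_mem_map.2 fun a _ => hm a)

theorem setOf_sim_congr (hsim : Equivalence sim) (h : sim v w) :
    {u | sim u v} = {u | sim u w} :=
  Set.ext fun _ => ⟨fun hu => hsim.trans hu h, fun hu => hsim.trans hu (hsim.symm h)⟩

theorem massCl_congr (hsim : Equivalence sim) (h : sim v w) :
    massCl sim m v = massCl sim m w := by
  rw [massCl, massCl, setOf_sim_congr hsim h]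

theorem massCl_pos (hsim : Equivalence sim) (hfin : {u | sim u w}.Finite) (hm : ∀ a, 0 < m a) :
    0 < massCl sim m w :=
  finsum_cond_pos (fun u _ => (mW_pos hm u).le) ⟨w, hsim.refl w, mW_pos hm w⟩
    (hfin.inter_of_right _)

theorem Rnum_pos (hsim : Equivalence sim) (hfin : {u | sim u w}.Finite) : 0 < Rnum sim w :=
  (Set.ncard_pos hfin).2 ⟨w, hsim.refl w⟩

theorem pTrans_append_singleton (hsim : Equivalence sim) (u w : Word A) (i : A) :
    pTrans sim m u (w ++ [i]) =
      {x | sim x w}.indicator (fun _ => mW m (w ++ [i]) / massCl sim m w) u := by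
  have hstep : (∃ v : Word A, ∃ j : A, sim v u ∧ w ++ [i] = v ++ [j]) ↔ sim u w := by
    constructor
    · rintro ⟨v, j, h, e⟩
      obtain ⟨rfl, -⟩ := List.append_inj' e rfl
      exact hsim.symm h
    · exact fun h => ⟨w, i, hsim.symm h, rfl⟩
  by_cases h : sim u w
  · rw [pTrans, if_pos (hstep.2 h), Set.indicator_of_mem (by exact h), massCl_congr hsim h]
  · rw [pTrans, if_neg (mt hstep.1 h), Set.indicator_of_notMem (by exact h)]

theorem pn_succ_append_singleton (hsim : Equivalence sim) (n : ℕ) (v w : Word A) (i : A) :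
    pn sim m (n + 1) v (w ++ [i]) =
      mW m (w ++ [i]) / massCl sim m w * ∑ᶠ u ∈ {u | sim u w}, pn sim m n v u := by
  rw [pn, mul_finsum_mem, finsum_mem_def]
  refine finsum_congr fun u => ?_
  rw [pTrans_append_singleton hsim, mul_comm, Set.indicator_mul_left]

theorem green_self (v : Word A) : green sim m v v = 1 := by
  simp [green, pn]

theorem green_eq_zero_of_length_le (hne : v ≠ w) (h : w.length ≤ v.length) :
    green sim m v w = 0 := by
  rw [green]
  split_ifs with h'
  · rw [Nat.sub_eq_zero_of_le h, pn, if_neg hne.symm]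
  · rfl

theorem green_append_singleton (hsim : Equivalence sim)
    (hlen : ∀ v w, sim v w → v.length = w.length) {i : A} (hne : v ≠ w ++ [i]) :
    green sim m v (w ++ [i]) =
      mW m (w ++ [i]) / massCl sim m w * ∑ᶠ u ∈ {u | sim u w}, green sim m v u := by
  have hlen_append : (w ++ [i]).length = w.length + 1 := List.length_append
  rcases le_or_gt v.length w.length with h | h
  · rw [green, if_pos (by omega), hlen_append, Nat.sub_add_comm h, pn_succ_append_singleton hsim]
    congr 1
    refine finsum_mem_congr rfl fun u hu => ?_
    rw [green, hlen u w hu, if_pos h]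
  · rw [green_eq_zero_of_length_le hne (by omega), finsum_mem_eq_zero_of_forall_eq_zero,
      mul_zero]
    intro u hu
    have huv : u.length < v.length := (hlen u w hu).trans_lt h
    exact green_eq_zero_of_length_le (fun e => huv.ne (congrArg List.length e.symm)) huv.le

theorem finsum_mem_green_of_sim (hlen : ∀ v w, sim v w → v.length = w.length) (h : sim v w) :
    ∑ᶠ u ∈ {u | sim u w}, green sim m v u = 1 := by
  have hsupp : ∀ u ∈ Function.support (green sim m v),
      u ∈ {u | sim u w} ↔ u ∈ ({v} : Set (Word A)) := by
    refine fun u hu => ⟨fun huw => ?_, fun huv => Set.mem_singleton_iff.1 huv ▸ h⟩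
    by_contra huv
    have hle : u.length ≤ v.length := ((hlen u w huw).trans (hlen v w h).symm).le
    exact hu (green_eq_zero_of_length_le (Ne.symm huv) hle)
  rw [finsum_mem_inter_support_eq' _ _ _ hsupp, finsum_mem_singleton, green_self]

theorem qfun_self (v : Word A) : qfun sim m v v = 1 :=
  if_pos rfl

theorem qfun_eq_zero_of_length_le (hne : v ≠ w) (h : w.length ≤ v.length) :
    qfun sim m v w = 0 := by
  rw [qfun, if_neg hne, green_eq_zero_of_length_le hne h, zero_mul, zero_div]

theorem mW_mul_qfun (hm : ∀ a, 0 < m a) (hne : v ≠ w) :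
    mW m w * qfun sim m v w = massCl sim m v * green sim m v w := by
  rw [qfun, if_neg hne, mul_div_cancel₀ _ (mW_pos hm w).ne', mul_comm]

theorem qfun_append_singleton (hsim : Equivalence sim) (hlen : ∀ v w, sim v w → v.length = w.length)
    (hm : ∀ a, 0 < m a) {i : A} (hne : v ≠ w ++ [i]) :
    qfun sim m v (w ++ [i]) =
      massCl sim m v / massCl sim m w * ∑ᶠ u ∈ {u | sim u w}, green sim m v u := by
  apply mul_left_cancel₀ (mW_pos hm (w ++ [i])).ne'
  rw [mW_mul_qfun hm hne, green_append_singleton hsim hlen hne]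
  ring

theorem qfun_append_singleton_of_sim (hsim : Equivalence sim)
    (hlen : ∀ v w, sim v w → v.length = w.length) (hfin : {u | sim u w}.Finite)
    (hm : ∀ a, 0 < m a) (i : A) (h : sim v w) : qfun sim m v (w ++ [i]) = 1 := by
  have hne : v ≠ w ++ [i] := fun e => by simpa [e] using hlen v w h
  rw [qfun_append_singleton hsim hlen hm hne, finsum_mem_green_of_sim hlen h, massCl_congr hsim h,
    div_self (massCl_pos hsim hfin hm).ne', mul_one]

theorem qfun_append_singleton_congr (hsim : Equivalence sim)
    (hlen : ∀ v w, sim v w → v.length = w.length) (hm : ∀ a, 0 < m a) {i j : A}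
    (hx : v ≠ x ++ [i]) (hy : v ≠ y ++ [j]) (h : sim x y) :
    qfun sim m v (x ++ [i]) = qfun sim m v (y ++ [j]) := by
  rw [qfun_append_singleton hsim hlen hm hx, qfun_append_singleton hsim hlen hm hy,
    massCl_congr hsim h, setOf_sim_congr hsim h]

theorem qfun_congr_of_sim_dropLast (hsim : Equivalence sim)
    (hlen : ∀ v w, sim v w → v.length = w.length) (hm : ∀ a, 0 < m a) (hu : v ≠ u) (hw : v ≠ w)
    (huw : u.length = w.length) (h : sim u.dropLast w.dropLast) :
    qfun sim m v u = qfun sim m v w := by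
  rcases List.eq_nil_or_concat' u with rfl | ⟨x, i, rfl⟩ <;>
    rcases List.eq_nil_or_concat' w with rfl | ⟨y, j, rfl⟩
  · rfl
  · simp at huw
  · simp at huw
  · exact qfun_append_singleton_congr hsim hlen hm hu hw (by simpa using h)

theorem massCl_mul_qfun_append_singleton (hsim : Equivalence sim)
    (hlen : ∀ v w, sim v w → v.length = w.length) (hfin : {u | sim u w}.Finite)
    (hm : ∀ a, 0 < m a) {i : A} (hv : ¬ sim v w) (hne : v ≠ w ++ [i]) :
    massCl sim m w * qfun sim m v (w ++ [i]) =
      ∑ᶠ u ∈ {u | sim u w}, mW m u * qfun sim m v u := by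
  rw [qfun_append_singleton hsim hlen hm hne, ← mul_assoc,
    mul_div_cancel₀ _ (massCl_pos hsim hfin hm).ne', mul_finsum_mem]
  refine finsum_mem_congr rfl fun u hu => (mW_mul_qfun hm ?_).symm
  exact fun e => hv (e ▸ hu)

theorem Rnum_mul_finsum_mem_mW_mul_qfun (hsim : Equivalence sim)
    (hlen : ∀ v w, sim v w → v.length = w.length) (hfin : {u | sim u w}.Finite)
    (hm : ∀ a, 0 < m a) (hB : B2 sim m) (hv : ¬ sim v w) :
    (Rnum sim w : ℝ) * ∑ᶠ u ∈ {u | sim u w}, mW m u * qfun sim m v u =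
      massCl sim m w * ∑ᶠ u ∈ {u | sim u w}, qfun sim m v u := by
  rcases hB w with hmass | hparent
  · exact ncard_mul_finsum_mem_mul_of_const hfin hmass
  · have hq : ∀ u ∈ {u | sim u w}, qfun sim m v u = qfun sim m v w := fun u hu =>
      qfun_congr_of_sim_dropLast hsim hlen hm (fun e => hv (e ▸ hu))
        (fun e => hv (e ▸ hsim.refl w)) (hlen u w hu) (hparent u hu)
    simp only [mul_comm (mW m _)]
    rw [mul_comm (massCl sim m w)]
    exact ncard_mul_finsum_mem_mul_of_const hfin hq

theorem qfun_append_singleton_eq_average (hsim : Equivalence sim)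
    (hlen : ∀ v w, sim v w → v.length = w.length) (hfin : {u | sim u w}.Finite)
    (hm : ∀ a, 0 < m a) (hB : B2 sim m) {i : A} (hv : ¬ sim v w) (hne : v ≠ w ++ [i]) :
    qfun sim m v (w ++ [i]) = 1 / (Rnum sim w : ℝ) * ∑ᶠ u ∈ {u | sim u w}, qfun sim m v u := by
  have hR : (Rnum sim w : ℝ) ≠ 0 := Nat.cast_ne_zero.2 (Rnum_pos hsim hfin).ne'
  rw [one_div, eq_inv_mul_iff_mul_eq₀ hR]
  apply mul_left_cancel₀ (massCl_pos hsim hfin hm).ne'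
  rw [mul_left_comm, massCl_mul_qfun_append_singleton hsim hlen hfin hm hv hne,
    Rnum_mul_finsum_mem_mW_mul_qfun hsim hlen hfin hm hB hv]

theorem qfun_eq_qfun_of_B2 (hsim : Equivalence sim)
    (hlen : ∀ v w, sim v w → v.length = w.length) (hfin : ∀ w, {u | sim u w}.Finite)
    (hm : ∀ a, 0 < m a) (hB : B2 sim m) (hm' : ∀ a, 0 < m' a) (hB' : B2 sim m') (v w : Word A) :
    qfun sim m v w = qfun sim m' v w := by
  induction w using (measure List.length).wf.induction with | _ w ih
  by_cases hvw : v = w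
  · rw [hvw, qfun_self, qfun_self]
  obtain rfl | ⟨x, i, rfl⟩ := List.eq_nil_or_concat' w
  · rw [qfun_eq_zero_of_length_le hvw (Nat.zero_le _),
      qfun_eq_zero_of_length_le hvw (Nat.zero_le _)]
  by_cases hvx : sim v x
  · rw [qfun_append_singleton_of_sim hsim hlen (hfin x) hm i hvx,
      qfun_append_singleton_of_sim hsim hlen (hfin x) hm' i hvx]
  · have hclass : ∀ u ∈ {u | sim u x}, qfun sim m v u = qfun sim m' v u := by
      intro u hu
      have hlt : u.length < (x ++ [i]).length := by simp [hlen u x hu]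
      exact ih u hlt
    rw [qfun_append_singleton_eq_average hsim hlen (hfin x) hm hB hvx hvw,
      qfun_append_singleton_eq_average hsim hlen (hfin x) hm' hB' hvx hvw,
      finsum_mem_congr rfl hclass]

theorem finite_setOf_sim [Finite A] (hlen : ∀ v w, sim v w → v.length = w.length) (w : Word A) :
    {u | sim u w}.Finite :=
  (List.finite_length_eq A w.length).subset fun u hu => hlen u w hu

end Martin

theorem qfun_average_general {A : Type*} {sim : Martin.Word A → Martin.Word A → Prop}
    (hsim : Equivalence sim) (hlen : ∀ v w : Martin.Word A, sim v w → v.length = w.length)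
    (hfin : ∀ w : Martin.Word A, {u | sim u w}.Finite) :
    (∀ m : A → ℝ, (∀ a, 0 < m a) → Martin.B2 sim m →
      ∀ (v w : Martin.Word A) (i : A), ¬ sim v w → v ≠ w ++ [i] →
        Martin.qfun sim m v (w ++ [i]) =
          (1 / (Martin.Rnum sim w : ℝ)) *
            ∑ᶠ w' ∈ {u : Martin.Word A | sim u w}, Martin.qfun sim m v w') ∧
    (∀ m m' : A → ℝ, (∀ a, 0 < m a) → Martin.B2 sim m → (∀ a, 0 < m' a) → Martin.B2 sim m' →
      ∀ v w : Martin.Word A, Martin.qfun sim m v w = Martin.qfun sim m' v w) :=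
  ⟨fun _ hm hB _ w _ => Martin.qfun_append_singleton_eq_average hsim hlen (hfin w) hm hB,
    fun _ _ => Martin.qfun_eq_qfun_of_B2 hsim hlen hfin⟩

theorem qfun_average {A : Type*} [Fintype A] (hA : 2 ≤ Fintype.card A)
    (sim : Martin.Word A → Martin.Word A → Prop) (hsim : Equivalence sim)
    (hlen : ∀ v w : Martin.Word A, sim v w → v.length = w.length) :
    (∀ m : A → ℝ, Martin.IsMassDistribution m → Martin.B2 sim m →
      ∀ (v w : Martin.Word A) (i : A), ¬ sim v w → v ≠ w ++ [i] →
        Martin.qfun sim m v (w ++ [i]) =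
          (1 / (Martin.Rnum sim w : ℝ)) *
            ∑ᶠ w' ∈ {u : Martin.Word A | sim u w}, Martin.qfun sim m v w') ∧
    (∀ m m' : A → ℝ, Martin.IsMassDistribution m → Martin.B2 sim m →
      Martin.IsMassDistribution m' → Martin.B2 sim m' →
      ∀ v w : Martin.Word A, Martin.qfun sim m v w = Martin.qfun sim m' v w) :=
  have ⟨haverage, hindep⟩ := qfun_average_general hsim hlen (Martin.finite_setOf_sim hlen)
  ⟨fun m hm => haverage m fun a => (hm.1 a).1,
    fun m m' hm hB hm' => hindep m m' (fun a => (hm.1 a).1) hB fun a => (hm'.1 a).1⟩
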